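/- arXiv:math-ph/0312059 — 2 statements merged into one kernel-verified Lean document; each statement's English description precedes it below -/
import Mathlib

section
/- The Baker–Akhiezer function of the Clifford torus evaluated at the spectral point λ = (1−i)/4 satisfies the Dirac equation with the Clifford torus potential: with ψ₁(x,y) = ((1+i)/4) e^{−ix/2} (2e^{iy/2} + √2(1−i)e^{−iy/2})/(sin y − √2), ψ₂(x,y) = −(√2/4) e^{−ix/2} (2e^{iy/2} − √2(1+i)e^{−iy/2})/(sin y − √2), and U(x,y) = sin y/(2√2(√2 − sin y)), the identities ∂ψ₂ + U ψ₁ = 0 and −∂̄ψ₁ + U ψ₂ = 0 hold for all (x,y) ∈ ℝ². -/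
open Real Complex

/-- Wirtinger derivative ∂f = (1/2)(∂f/∂x − i ∂f/∂y). -/
noncomputable def wirtingerD (f : ℝ → ℝ → ℂ) (x y : ℝ) : ℂ :=
  (1 / 2) * (deriv (fun t => f t y) x - Complex.I * deriv (fun t => f x t) y)

/-- Wirtinger derivative ∂̄f = (1/2)(∂f/∂x + i ∂f/∂y). -/
noncomputable def wirtingerDbar (f : ℝ → ℝ → ℂ) (x y : ℝ) : ℂ :=
  (1 / 2) * (deriv (fun t => f t y) x + Complex.I * deriv (fun t => f x t) y)

/-- First component of the Baker–Akhiezer function of the Clifford torus at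
the spectral point λ = (1−i)/4. -/
noncomputable def cliffordPsi₁ : ℝ → ℝ → ℂ := fun x y =>
  ((1 + Complex.I) / 4) * Complex.exp (-Complex.I * (x : ℂ) / 2)
    * (2 * Complex.exp (Complex.I * (y : ℂ) / 2)
        + (Real.sqrt 2 : ℂ) * (1 - Complex.I) * Complex.exp (-Complex.I * (y : ℂ) / 2))
    / ((Real.sin y : ℂ) - (Real.sqrt 2 : ℂ))

/-- Second component of the Baker–Akhiezer function of the Clifford torus at
the spectral point λ = (1−i)/4. -/
noncomputable def cliffordPsi₂ : ℝ → ℝ → ℂ := fun x y =>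
  -((Real.sqrt 2 : ℂ) / 4) * Complex.exp (-Complex.I * (x : ℂ) / 2)
    * (2 * Complex.exp (Complex.I * (y : ℂ) / 2)
        - (Real.sqrt 2 : ℂ) * (1 + Complex.I) * Complex.exp (-Complex.I * (y : ℂ) / 2))
    / ((Real.sin y : ℂ) - (Real.sqrt 2 : ℂ))

/-- The potential of the Weierstrass representation of the Clifford torus. -/
noncomputable def cliffordU : ℝ → ℝ → ℂ := fun _ y =>
  ((Real.sin y / (2 * Real.sqrt 2 * (Real.sqrt 2 - Real.sin y)) : ℝ) : ℂ)

/-- Derivative in x. -/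
lemma helper_dx (c G D : ℂ) (x : ℝ) :
    deriv (fun t : ℝ => c * Complex.exp (-Complex.I * (t : ℂ) / 2) * G / D) x
      = c * (Complex.exp (-Complex.I * (x : ℂ) / 2) * (-Complex.I / 2)) * G / D := by
  have h0 : HasDerivAt (fun t : ℝ => (t : ℂ)) 1 x := Complex.ofRealCLM.hasDerivAt
  have h := ((((h0.const_mul (-Complex.I)).div_const 2).cexp.const_mul c).mul_const G).div_const D
  rw [h.deriv]
  ring

lemma helper_dy (c d : ℂ) (y : ℝ) (hD : (Real.sin y : ℂ) - (Real.sqrt 2 : ℂ) ≠ 0) :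
    deriv (fun t : ℝ => c * (2 * Complex.exp (Complex.I * (t : ℂ) / 2)
        + d * Complex.exp (-Complex.I * (t : ℂ) / 2))
        / ((Real.sin t : ℂ) - (Real.sqrt 2 : ℂ))) y
      = c * ((2 * Complex.exp (Complex.I * (y : ℂ) / 2) * (Complex.I / 2)
        - d * Complex.exp (-Complex.I * (y : ℂ) / 2) * (Complex.I / 2))
          * ((Real.sin y : ℂ) - (Real.sqrt 2 : ℂ))
        - (2 * Complex.exp (Complex.I * (y : ℂ) / 2)
        + d * Complex.exp (-Complex.I * (y : ℂ) / 2)) * (Real.cos y : ℂ))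
        / ((Real.sin y : ℂ) - (Real.sqrt 2 : ℂ)) ^ 2 := by
  have h0 : HasDerivAt (fun t : ℝ => (t : ℂ)) 1 y := Complex.ofRealCLM.hasDerivAt
  have hs : HasDerivAt (fun t : ℝ => (Real.sin t : ℂ)) (Real.cos y : ℂ) y :=
    (Real.hasDerivAt_sin y).ofReal_comp
  have h1 := ((h0.const_mul (Complex.I)).div_const 2).cexp.const_mul 2
  have h2 := ((h0.const_mul (-Complex.I)).div_const 2).cexp.const_mul d
  have h := (((h1.add h2).const_mul c).div (hs.sub_const (Real.sqrt 2 : ℂ)) hD)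
  refine h.deriv.trans ?_
  simp only [Pi.add_apply]
  ring

lemma helper_key1 (r I E F s k : ℂ) (hr : r ^ 2 = 2) (hI : I ^ 2 = -1) (hEF : E * F = 1)
    (hs : s = (F ^ 2 - E ^ 2) * I / 2) (hk : k = (E ^ 2 + F ^ 2) / 2) :
    r * (-(r / 4) * (-(I / 2)) * (2 * E - r * (1 + I) * F) * (s - r)
      - I * (-(r / 4)) * ((2 * E * (I / 2) + r * (1 + I) * F * (I / 2)) * (s - r)
        - (2 * E - r * (1 + I) * F) * k))
      - s * ((1 + I) / 4) * (2 * E + r * (1 - I) * F) = 0 := by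
  subst hs hk
  grind

lemma helper_key2 (r I E F s k : ℂ) (hr : r ^ 2 = 2) (hI : I ^ 2 = -1) (hEF : E * F = 1)
    (hs : s = (F ^ 2 - E ^ 2) * I / 2) (hk : k = (E ^ 2 + F ^ 2) / 2) :
    -(r * ((1 + I) / 4 * (-(I / 2)) * (2 * E + r * (1 - I) * F) * (s - r)
      + I * ((1 + I) / 4) * ((2 * E * (I / 2) - r * (1 - I) * F * (I / 2)) * (s - r)
        - (2 * E + r * (1 - I) * F) * k)))
      - s * (-(r / 4)) * (2 * E - r * (1 + I) * F) = 0 := by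
  subst hs hk
  grind

lemma helper_fin1 (X : ℂ) (r I E F s k : ℂ) (hr : r ^ 2 = 2) (hI : I ^ 2 = -1) (hEF : E * F = 1)
    (hs : s = (F ^ 2 - E ^ 2) * I / 2) (hk : k = (E ^ 2 + F ^ 2) / 2) (hr0 : r ≠ 0) (hD : s - r ≠ 0) :
    1 / 2 * (-(r / 4) * (X * (-I / 2)) * (2 * E - r * (1 + I) * F) / (s - r)
      - I * (-(r / 4) * X * ((2 * E * (I / 2) + r * (1 + I) * F * (I / 2)) * (s - r)
        - (2 * E - r * (1 + I) * F) * k) / (s - r) ^ 2))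
      + -s / (2 * r * (s - r)) * ((1 + I) / 4 * X * (2 * E + r * (1 - I) * F) / (s - r)) = 0 := by
  have h := helper_key1 r I E F s k hr hI hEF hs hk
  clear hr hI hEF hs hk
  refine Eq.trans ?_ ((congrArg (fun w => X / (2 * r * (s - r) ^ 2) * w) h).trans (mul_zero _))
  beta_reduce
  generalize hd : s - r = D at *
  field_simp
  ring

lemma helper_fin2 (X : ℂ) (r I E F s k : ℂ) (hr : r ^ 2 = 2) (hI : I ^ 2 = -1) (hEF : E * F = 1)
    (hs : s = (F ^ 2 - E ^ 2) * I / 2) (hk : k = (E ^ 2 + F ^ 2) / 2) (hr0 : r ≠ 0) (hD : s - r ≠ 0) :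
    -(1 / 2 * ((1 + I) / 4 * (X * (-I / 2)) * (2 * E + r * (1 - I) * F) / (s - r)
      + I * ((1 + I) / 4 * X * ((2 * E * (I / 2) - r * (1 - I) * F * (I / 2)) * (s - r)
        - (2 * E + r * (1 - I) * F) * k) / (s - r) ^ 2)))
      + -s / (2 * r * (s - r)) * (-(r / 4) * X * (2 * E - r * (1 + I) * F) / (s - r)) = 0 := by
  have h := helper_key2 r I E F s k hr hI hEF hs hk
  clear hr hI hEF hs hk
  refine Eq.trans ?_ ((congrArg (fun w => X / (2 * r * (s - r) ^ 2) * w) h).trans (mul_zero _))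
  beta_reduce
  generalize hd : s - r = D at *
  field_simp
  ring

/-- The Baker–Akhiezer function of the Clifford torus at λ = (1−i)/4 satisfies
the Dirac equation with the Clifford torus potential. -/
theorem clifford_torus_dirac_equation (x y : ℝ) :
    wirtingerD cliffordPsi₂ x y + cliffordU x y * cliffordPsi₁ x y = 0 ∧
    -wirtingerDbar cliffordPsi₁ x y + cliffordU x y * cliffordPsi₂ x y = 0 := by
  have hlt : Real.sin y - Real.sqrt 2 < 0 := by
    have h1 : (1 : ℝ) < Real.sqrt 2 := by
      rw [Real.lt_sqrt] <;> norm_num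
    linarith [Real.sin_le_one y]
  have hD : (Real.sin y : ℂ) - (Real.sqrt 2 : ℂ) ≠ 0 := by
    exact_mod_cast hlt.ne
  have hr : (Real.sqrt 2 : ℂ) ^ 2 = 2 := by
    rw [← Complex.ofReal_pow, Real.sq_sqrt (by norm_num)]; norm_num
  have hr0 : (Real.sqrt 2 : ℂ) ≠ 0 := by
    intro h; rw [h] at hr; norm_num at hr
  have hEF : Complex.exp (Complex.I * (y : ℂ) / 2) * Complex.exp (-Complex.I * (y : ℂ) / 2) = 1 := by
    rw [← Complex.exp_add, ← Complex.exp_zero]; congr 1; ring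
  have hE2 : Complex.exp ((y : ℂ) * Complex.I) = Complex.exp (Complex.I * (y : ℂ) / 2) ^ 2 := by
    rw [← Complex.exp_nat_mul]; congr 1; push_cast; ring
  have hF2 : Complex.exp (-(y : ℂ) * Complex.I) = Complex.exp (-Complex.I * (y : ℂ) / 2) ^ 2 := by
    rw [← Complex.exp_nat_mul]; congr 1; push_cast; ring
  have hs : (Real.sin y : ℂ) = (Complex.exp (-Complex.I * (y : ℂ) / 2) ^ 2
      - Complex.exp (Complex.I * (y : ℂ) / 2) ^ 2) * Complex.I / 2 := by
    rw [Complex.ofReal_sin, Complex.sin, hE2, hF2]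
  have hc : (Real.cos y : ℂ) = (Complex.exp (Complex.I * (y : ℂ) / 2) ^ 2
      + Complex.exp (-Complex.I * (y : ℂ) / 2) ^ 2) / 2 := by
    rw [Complex.ofReal_cos, Complex.cos, hE2, hF2]
  have hI := Complex.I_sq
  have hU : cliffordU x y = -(Real.sin y : ℂ) /
      (2 * (Real.sqrt 2 : ℂ) * ((Real.sin y : ℂ) - (Real.sqrt 2 : ℂ))) := by
    unfold cliffordU
    push_cast
    rw [← neg_sub ((Complex.sin y : ℂ)) (Real.sqrt 2 : ℂ), mul_neg, div_neg, neg_div]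
  have a1 := helper_dy ((1 + Complex.I) / 4 * Complex.exp (-Complex.I * (x : ℂ) / 2))
    ((Real.sqrt 2 : ℂ) * (1 - Complex.I)) y hD
  have a2 := helper_dy (-((Real.sqrt 2 : ℂ) / 4) * Complex.exp (-Complex.I * (x : ℂ) / 2))
    (-((Real.sqrt 2 : ℂ) * (1 + Complex.I))) y hD
  simp only [neg_mul (_ * _) (Complex.exp _), neg_mul (_ * _ * _) (_ / _),
    ← sub_eq_add_neg, sub_neg_eq_add] at a2
  rw [hU]
  unfold wirtingerD wirtingerDbar
  simp only [cliffordPsi₁, cliffordPsi₂]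
  rw [helper_dx, helper_dx, a1, a2]
  exact ⟨helper_fin1 _ _ _ _ _ _ _ hr hI hEF hs hc hr0 hD,
    helper_fin2 _ _ _ _ _ _ _ hr hI hEF hs hc hr0 hD⟩
end

section
/- The Weierstrass representation data of the Baker–Akhiezer function of the Clifford torus at λ = (1−i)/4 satisfy, for all (x,y) ∈ ℝ²: i·(conj ψ₂)² = −((1+i)/2) e^{ix} (√2 − cos y − sin y)/(sin y − √2)² and ψ₁ · conj(ψ₂) = (√2 i/2)(√2 sin y − 1)/(sin y − √2)², where conj denotes complex conjugation. In particular, up to a rotation of the (x₁,x₂)-plane and the scaling factor 1/⁴√2, these agree with the Weierstrass data ∂(x₁+ix₂) = i (conj ψ₂)², ∂x₃ = ψ₁ conj(ψ₂) of the Clifford torus. -/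
open Real Complex

/-- The Weierstrass representation data of the Baker–Akhiezer function of the
Clifford torus at λ = (1−i)/4. -/
theorem clifford_torus_weierstrass_data (x y : ℝ) :
    Complex.I * (starRingEnd ℂ (cliffordPsi₂ x y)) ^ 2
      = -((1 + Complex.I) / 2) * Complex.exp (Complex.I * (x : ℂ))
          * ((Real.sqrt 2 : ℂ) - (Real.cos y : ℂ) - (Real.sin y : ℂ))
          / ((Real.sin y : ℂ) - (Real.sqrt 2 : ℂ)) ^ 2 ∧
    cliffordPsi₁ x y * starRingEnd ℂ (cliffordPsi₂ x y)
      = ((Real.sqrt 2 : ℂ) * Complex.I / 2)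
          * ((Real.sqrt 2 : ℂ) * (Real.sin y : ℂ) - 1)
          / ((Real.sin y : ℂ) - (Real.sqrt 2 : ℂ)) ^ 2 := by
  have hr : (Real.sqrt 2 : ℂ) ^ 2 = 2 := by
    rw [← Complex.ofReal_pow, Real.sq_sqrt (by norm_num)]; norm_num
  have hI : Complex.I ^ 2 = -1 := Complex.I_sq
  have hD : (Real.sin y : ℂ) - (Real.sqrt 2 : ℂ) ≠ 0 := by
    rw [← Complex.ofReal_sub, Complex.ofReal_ne_zero]
    have h1 := Real.sin_le_one y
    have h2 : (1 : ℝ) < Real.sqrt 2 := Real.one_lt_sqrt_two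
    linarith
  have hF : Complex.exp (Complex.I * (y : ℂ) / 2) ^ 2
      = (Real.cos y : ℂ) + (Real.sin y : ℂ) * Complex.I := by
    rw [← Complex.exp_nat_mul, Complex.ofReal_cos, Complex.ofReal_sin, ← Complex.exp_mul_I]
    congr 1; push_cast; ring
  have hG : Complex.exp (-Complex.I * (y : ℂ) / 2) ^ 2
      = (Real.cos y : ℂ) - (Real.sin y : ℂ) * Complex.I := by
    have h := Complex.exp_mul_I (-(y : ℂ))
    rw [Complex.cos_neg, Complex.sin_neg] at h
    rw [← Complex.exp_nat_mul, Complex.ofReal_cos, Complex.ofReal_sin, sub_eq_add_neg,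
      ← neg_mul, ← h]
    congr 1; push_cast; ring
  have hFG : Complex.exp (Complex.I * (y : ℂ) / 2) * Complex.exp (-Complex.I * (y : ℂ) / 2) = 1 := by
    rw [← Complex.exp_add, ← Complex.exp_zero]; congr 1; ring
  have hEE : Complex.exp (Complex.I * (x : ℂ) / 2) * Complex.exp (-Complex.I * (x : ℂ) / 2) = 1 := by
    rw [← Complex.exp_add, ← Complex.exp_zero]; congr 1; ring
  have hE : Complex.exp (Complex.I * (x : ℂ)) = Complex.exp (Complex.I * (x : ℂ) / 2) ^ 2 := by
    rw [← Complex.exp_nat_mul]; congr 1; push_cast; ring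
  have hc : starRingEnd ℂ (cliffordPsi₂ x y) =
      -((Real.sqrt 2 : ℂ) / 4) * Complex.exp (Complex.I * (x : ℂ) / 2)
    * (2 * Complex.exp (-Complex.I * (y : ℂ) / 2)
        - (Real.sqrt 2 : ℂ) * (1 - Complex.I) * Complex.exp (Complex.I * (y : ℂ) / 2))
    / ((Real.sin y : ℂ) - (Real.sqrt 2 : ℂ)) := by
    simp only [cliffordPsi₂, map_div₀, map_mul, map_sub, map_neg, map_add, map_one,
      Complex.conj_ofReal, ← Complex.exp_conj, Complex.conj_I, map_ofNat, neg_neg,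
      sub_eq_add_neg]
  rw [hc, cliffordPsi₁, hE]
  generalize Complex.exp (Complex.I * (x : ℂ) / 2) = E at *
  generalize Complex.exp (-Complex.I * (x : ℂ) / 2) = E' at *
  generalize Complex.exp (Complex.I * (y : ℂ) / 2) = F at *
  generalize Complex.exp (-Complex.I * (y : ℂ) / 2) = G at *
  clear hc hE
  generalize (Real.sin y : ℂ) = s at *
  generalize (Real.cos y : ℂ) = c at *
  generalize (Real.sqrt 2 : ℂ) = r at *
  generalize Complex.I = i at *
  constructor
  · rw [div_pow, ← mul_div_assoc]
    congr 1
    grind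
  · rw [div_mul_div_comm, ← sq]
    congr 1
    grind
end
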